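/- Gauge invariance under total derivatives (coordinate form): Let (ρ,C) be local Lie algebroid data on ℝ^n with fiber ℝ^m satisfying the first structure equation, and let f : ℝ^n → ℝ be smooth. Define ΔL : ℝ^n × ℝ^m → ℝ by ΔL(x,y) := Σ_{i,α} ∂f/∂x^i(x) ρ^i_α(x) y^α (the 'total time derivative' of f along admissible curves). Then for every admissible C¹ curve (x,y) : [t₀,t₁] → ℝ^n × ℝ^m, the Euler–Lagrange expression of ΔL vanishes identically: d/dt[∂ΔL/∂y^α(x(t),y(t))] + Σ_{β,γ} C^γ_{αβ}(x(t)) y^β(t) ∂ΔL/∂y^γ(x(t),y(t)) = Σ_i ρ^i_α(x(t)) ∂ΔL/∂x^i(x(t),y(t)) for all α and all t ∈ [t₀,t₁]. Consequently, for any C² Lagrangian L, the curves solving Lagrange's equations for L and for L + ΔL coincide. -/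

import Mathlib

/-!
Let `e_α = ρ^i_α ∂_i` be the anchored vector fields and `D_α` differentiation along `e_α`. The first
structure equation says `[e_α, e_β] = C^γ_{αβ} e_γ`, hence
`D_α (D_β f) - D_β (D_α f) = C^γ_{αβ} D_γ f`. An admissible curve has velocity `y^β e_β`, so that
`d/dt g(x) = y^β D_β g`. Since `ΔL = y^β D_β f` has momenta `D_α f`, its Euler–Lagrange expression
is `y^β (D_β (D_α f) + C^γ_{αβ} D_γ f - D_α (D_β f)) = 0`. Lagrange's equations are linear in the
Lagrangian, so adding `ΔL` to `L` does not change them.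
-/

open Set

/-- Partial derivative of a scalar function on `ℝ^n` in the `j`-th coordinate direction. -/
noncomputable def pderiv' {n : ℕ} (f : (Fin n → ℝ) → ℝ) (x : Fin n → ℝ) (j : Fin n) : ℝ :=
  deriv (fun s => f (Function.update x j s)) (x j)

/-- Local Lie algebroid data on `ℝ^n` with fiber `ℝ^m`: smooth anchor coefficients
`ρ^i_α` and smooth structure functions `C^α_{βγ}`, antisymmetric in the lower indices. -/
structure LocalAlgebroidData (n m : ℕ) where
  ρ : (Fin n → ℝ) → Fin n → Fin m → ℝ
  C : (Fin n → ℝ) → Fin m → Fin m → Fin m → ℝ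
  smooth_ρ : ContDiff ℝ (⊤ : ℕ∞) ρ
  smooth_C : ContDiff ℝ (⊤ : ℕ∞) C
  antisymm : ∀ x α β γ, C x α β γ = - C x α γ β

/-- Partial derivative `∂L/∂x^i` of a Lagrangian `L : ℝ^n × ℝ^m → ℝ`. -/
noncomputable def pLx {n m : ℕ} (L : (Fin n → ℝ) × (Fin m → ℝ) → ℝ)
    (x : Fin n → ℝ) (y : Fin m → ℝ) (i : Fin n) : ℝ :=
  pderiv' (fun z => L (z, y)) x i

/-- Partial derivative `∂L/∂y^α` of a Lagrangian `L : ℝ^n × ℝ^m → ℝ`. -/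
noncomputable def pLy {n m : ℕ} (L : (Fin n → ℝ) × (Fin m → ℝ) → ℝ)
    (x : Fin n → ℝ) (y : Fin m → ℝ) (α : Fin m) : ℝ :=
  pderiv' (fun w => L (x, w)) y α

/-- The Euler–Lagrange expression
`EL_α(t) = d/dt[∂L/∂y^α] + Σ_{β,γ} C^γ_{αβ} y^β ∂L/∂y^γ − Σ_i ρ^i_α ∂L/∂x^i`
of a curve `(x,y)`. -/
noncomputable def ELexpr {n m : ℕ} (A : LocalAlgebroidData n m)
    (L : (Fin n → ℝ) × (Fin m → ℝ) → ℝ)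
    (x : ℝ → Fin n → ℝ) (y : ℝ → Fin m → ℝ) (α : Fin m) (t : ℝ) : ℝ :=
  deriv (fun s => pLy L (x s) (y s) α) t
    + ∑ β, ∑ γ, A.C (x t) γ α β * y t β * pLy L (x t) (y t) γ
    - ∑ i, A.ρ (x t) i α * pLx L (x t) (y t) i

/-- The curve `(x,y)` is admissible on `[t₀,t₁]`: `(x^i)' = Σ_α ρ^i_α(x) y^α`. -/
def IsAdmissible {n m : ℕ} (A : LocalAlgebroidData n m) (t₀ t₁ : ℝ)
    (x : ℝ → Fin n → ℝ) (y : ℝ → Fin m → ℝ) : Prop :=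
  ∀ t ∈ Icc t₀ t₁, ∀ i, deriv (fun s => x s i) t = ∑ α, A.ρ (x t) i α * y t α

/-- `(x,y)` is a solution of Lagrange's equations for `L` on `[t₀,t₁]`. -/
def IsLagrangeSolution {n m : ℕ} (A : LocalAlgebroidData n m)
    (L : (Fin n → ℝ) × (Fin m → ℝ) → ℝ) (t₀ t₁ : ℝ)
    (x : ℝ → Fin n → ℝ) (y : ℝ → Fin m → ℝ) : Prop :=
  ∀ α, ∀ t ∈ Icc t₀ t₁,
    deriv (fun s => pLy L (x s) (y s) α) t
        + ∑ β, ∑ γ, A.C (x t) γ α β * y t β * pLy L (x t) (y t) γ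
      = ∑ i, A.ρ (x t) i α * pLx L (x t) (y t) i

/-- A local morphism of local Lie algebroid data: a pair of smooth maps `(φ, Φ)`
satisfying the admissibility and morphism conditions. -/
structure LocalMorphism {n m n' m' : ℕ}
    (A : LocalAlgebroidData n m) (A' : LocalAlgebroidData n' m') where
  φ : (Fin n → ℝ) → Fin n' → ℝ
  Φ : (Fin n → ℝ) → Fin m' → Fin m → ℝ
  smooth_φ : ContDiff ℝ (⊤ : ℕ∞) φ
  smooth_Φ : ContDiff ℝ (⊤ : ℕ∞) Φ
  adm : ∀ x (k : Fin n') (α : Fin m),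
    ∑ i, pderiv' (fun z => φ z k) x i * A.ρ x i α
      = ∑ β, A'.ρ (φ x) k β * Φ x β α
  morph : ∀ x (α : Fin m') (μ ν : Fin m),
    (∑ i, (A.ρ x i ν * pderiv' (fun z => Φ z α μ) x i
            - A.ρ x i μ * pderiv' (fun z => Φ z α ν) x i))
      + (∑ β, Φ x α β * A.C x β μ ν)
      - (∑ β, ∑ γ, A'.C (φ x) α β γ * Φ x β μ * Φ x γ ν) = 0

/-- The first structure equation of local Lie algebroid data. -/
def FirstStructureEq {n m : ℕ} (A : LocalAlgebroidData n m) : Prop :=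
  ∀ (x : Fin n → ℝ) (i : Fin n) (α β : Fin m),
    ∑ j, (A.ρ x j α * pderiv' (fun z => A.ρ z i β) x j
           - A.ρ x j β * pderiv' (fun z => A.ρ z i α) x j)
      = ∑ γ, A.ρ x i γ * A.C x γ α β

section PartialDerivatives

variable {n m : ℕ}

lemma pderiv'_eq_fderiv {f : (Fin n → ℝ) → ℝ} {x : Fin n → ℝ} (hf : DifferentiableAt ℝ f x)
    (j : Fin n) : pderiv' f x j = fderiv ℝ f x (Pi.single j 1) := by
  have hf' : HasFDerivAt f (fderiv ℝ f x) (Function.update x j (x j)) := by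
    simpa only [Function.update_eq_self] using hf.hasFDerivAt
  exact (hf'.comp_hasDerivAt (x j) (hasDerivAt_update x j (x j))).deriv

lemma sum_mul_pderiv' {f : (Fin n → ℝ) → ℝ} {x : Fin n → ℝ} (hf : DifferentiableAt ℝ f x)
    (v : Fin n → ℝ) : ∑ j, v j * pderiv' f x j = fderiv ℝ f x v := by
  conv_rhs => rw [pi_eq_sum_univ' v]
  simp only [map_sum, map_smul, smul_eq_mul, pderiv'_eq_fderiv hf]

variable {L M : (Fin n → ℝ) × (Fin m → ℝ) → ℝ} {x : Fin n → ℝ} {y : Fin m → ℝ}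

lemma pLx_eq_fderiv (hL : DifferentiableAt ℝ L (x, y)) (i : Fin n) :
    pLx L x y i = fderiv ℝ L (x, y) (Pi.single i 1, 0) := by
  have hLx := hL.hasFDerivAt.comp x (hasFDerivAt_prodMk_left (𝕜 := ℝ) x y)
  exact (pderiv'_eq_fderiv hLx.differentiableAt i).trans (by rw [hLx.fderiv]; simp)

lemma pLy_eq_fderiv (hL : DifferentiableAt ℝ L (x, y)) (α : Fin m) :
    pLy L x y α = fderiv ℝ L (x, y) (0, Pi.single α 1) := by
  have hLy := hL.hasFDerivAt.comp y (hasFDerivAt_prodMk_right (𝕜 := ℝ) x y)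
  exact (pderiv'_eq_fderiv hLy.differentiableAt α).trans (by rw [hLy.fderiv]; simp)

lemma pLx_add (hL : DifferentiableAt ℝ L (x, y)) (hM : DifferentiableAt ℝ M (x, y)) (i : Fin n) :
    pLx (L + M) x y i = pLx L x y i + pLx M x y i := by
  simp only [pLx_eq_fderiv, hL, hM, hL.add hM, fderiv_add, add_apply]

lemma pLy_add (hL : DifferentiableAt ℝ L (x, y)) (hM : DifferentiableAt ℝ M (x, y)) (α : Fin m) :
    pLy (L + M) x y α = pLy L x y α + pLy M x y α := by
  simp only [pLy_eq_fderiv, hL, hM, hL.add hM, fderiv_add, add_apply]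

lemma differentiableAt_pLy_comp (hL : ContDiff ℝ 2 L) {x : ℝ → Fin n → ℝ} {y : ℝ → Fin m → ℝ}
    {t : ℝ} (hx : DifferentiableAt ℝ x t) (hy : DifferentiableAt ℝ y t) (α : Fin m) :
    DifferentiableAt ℝ (fun s => pLy L (x s) (y s) α) t := by
  simp only [pLy_eq_fderiv (hL.differentiable two_ne_zero _)]
  have hL' : Differentiable ℝ (fderiv ℝ L) :=
    (hL.fderiv_right (m := 1) one_add_one_eq_two.le).differentiable one_ne_zero
  exact ((hL' _).comp t (hx.prodMk hy)).clm_apply (differentiableAt_const _)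

end PartialDerivatives

lemma isLagrangeSolution_add_iff {n m : ℕ} {A : LocalAlgebroidData n m}
    {L M : (Fin n → ℝ) × (Fin m → ℝ) → ℝ} {t₀ t₁ : ℝ} {x : ℝ → Fin n → ℝ} {y : ℝ → Fin m → ℝ}
    (hL : Differentiable ℝ L) (hM : Differentiable ℝ M)
    (hLy : ∀ α, ∀ t ∈ Icc t₀ t₁, DifferentiableAt ℝ (fun s => pLy L (x s) (y s) α) t)
    (hMy : ∀ α, ∀ t ∈ Icc t₀ t₁, DifferentiableAt ℝ (fun s => pLy M (x s) (y s) α) t)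
    (hsol : IsLagrangeSolution A M t₀ t₁ x y) :
    IsLagrangeSolution A (L + M) t₀ t₁ x y ↔ IsLagrangeSolution A L t₀ t₁ x y := by
  refine forall_congr' fun α => forall₂_congr fun t ht => ?_
  simp only [pLy_add (hL _) (hM _), pLx_add (hL _) (hM _), mul_add, Finset.sum_add_distrib,
    deriv_fun_add (hLy α t ht) (hMy α t ht)]
  rw [add_add_add_comm, hsol α t ht, add_left_inj]

namespace LocalAlgebroidData

variable {n m : ℕ} (A : LocalAlgebroidData n m)

/-- The anchored vector field `e_α = Σ_i ρ^i_α ∂_i`, the image under the anchor of the `α`-th basis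
section. -/
def anchor (α : Fin m) (x : Fin n → ℝ) : Fin n → ℝ := fun i => A.ρ x i α

/-- The derivative `D_α f = Σ_i ρ^i_α ∂_i f` of a function along the anchored vector field `e_α`.
It is expressed by the Fréchet derivative, and so has the intended meaning only for
differentiable `f`. -/
noncomputable def anchorDeriv (α : Fin m) (f : (Fin n → ℝ) → ℝ) (x : Fin n → ℝ) : ℝ :=
  fderiv ℝ f x (A.anchor α x)

/-- The Lagrangian `ΔL(x,y) = Σ_{i,α} ∂f/∂x^i(x) ρ^i_α(x) y^α`, the total time derivative of `f`
along admissible curves. -/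
noncomputable def totalDerivative (f : (Fin n → ℝ) → ℝ) (p : (Fin n → ℝ) × (Fin m → ℝ)) : ℝ :=
  ∑ i, ∑ α, pderiv' f p.1 i * A.ρ p.1 i α * p.2 α

lemma contDiff_anchor (α : Fin m) : ContDiff ℝ (⊤ : ℕ∞) (A.anchor α) :=
  contDiff_pi.2 fun i => contDiff_pi.1 (contDiff_pi.1 A.smooth_ρ i) α

lemma differentiable_anchor (α : Fin m) : Differentiable ℝ (A.anchor α) :=
  (A.contDiff_anchor α).differentiable (by simp)

variable {A} {f : (Fin n → ℝ) → ℝ}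

lemma differentiable_anchorDeriv (hf : ContDiff ℝ 2 f) (α : Fin m) :
    Differentiable ℝ (A.anchorDeriv α f) :=
  ((hf.fderiv_right (m := 1) one_add_one_eq_two.le).differentiable one_ne_zero).clm_apply
    (A.differentiable_anchor α)

lemma sum_ρ_mul_pderiv' {x : Fin n → ℝ} (hf : DifferentiableAt ℝ f x) (α : Fin m) :
    ∑ i, A.ρ x i α * pderiv' f x i = A.anchorDeriv α f x :=
  sum_mul_pderiv' hf (A.anchor α x)

lemma totalDerivative_eq_sum_anchorDeriv (hf : Differentiable ℝ f) :
    A.totalDerivative f = fun p => ∑ β, p.2 β * A.anchorDeriv β f p.1 := by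
  funext p
  simp only [totalDerivative, ← sum_ρ_mul_pderiv' (hf p.1), Finset.mul_sum]
  rw [Finset.sum_comm]
  exact Finset.sum_congr rfl fun β _ => Finset.sum_congr rfl fun i _ => by ring

lemma differentiable_totalDerivative (hf : ContDiff ℝ 2 f) :
    Differentiable ℝ (A.totalDerivative f) := by
  have hD := differentiable_anchorDeriv (A := A) hf
  rw [totalDerivative_eq_sum_anchorDeriv (hf.differentiable two_ne_zero)]
  fun_prop

lemma pLy_totalDerivative (hf : Differentiable ℝ f) (x : Fin n → ℝ) (y : Fin m → ℝ) (α : Fin m) :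
    pLy (A.totalDerivative f) x y α = A.anchorDeriv α f x := by
  let ℓ : (Fin m → ℝ) →L[ℝ] ℝ := ∑ β, A.anchorDeriv β f x • ContinuousLinearMap.proj β
  have hℓ : (fun w => A.totalDerivative f (x, w)) = ℓ := by
    ext w
    simp [ℓ, totalDerivative_eq_sum_anchorDeriv hf, mul_comm]
  rw [pLy, hℓ, pderiv'_eq_fderiv ℓ.differentiableAt, ℓ.fderiv]
  simp [ℓ, Pi.single_apply]

lemma sum_ρ_mul_pLx_totalDerivative (hf : ContDiff ℝ 2 f) (x : Fin n → ℝ) (y : Fin m → ℝ)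
    (α : Fin m) :
    ∑ i, A.ρ x i α * pLx (A.totalDerivative f) x y i =
      ∑ β, y β * A.anchorDeriv α (A.anchorDeriv β f) x := by
  have hD β : DifferentiableAt ℝ (A.anchorDeriv β f) x := differentiable_anchorDeriv hf β x
  simp only [pLx, totalDerivative_eq_sum_anchorDeriv (hf.differentiable two_ne_zero)]
  calc ∑ i, A.ρ x i α * pderiv' (fun z => ∑ β, y β * A.anchorDeriv β f z) x i
      = A.anchorDeriv α (fun z => ∑ β, y β * A.anchorDeriv β f z) x :=
        sum_ρ_mul_pderiv' (by fun_prop) α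
    _ = ∑ β, y β * A.anchorDeriv α (A.anchorDeriv β f) x := by
        rw [anchorDeriv, fderiv_fun_sum fun β _ => (hD β).const_mul (y β)]
        simp only [fderiv_const_mul (hD _), sum_apply, smul_apply, smul_eq_mul]
        rfl

end LocalAlgebroidData

open LocalAlgebroidData

namespace FirstStructureEq

variable {n m : ℕ} {A : LocalAlgebroidData n m}

lemma lieBracket_anchor (hA : FirstStructureEq A) (α β : Fin m) (x : Fin n → ℝ) :
    VectorField.lieBracket ℝ (A.anchor α) (A.anchor β) x = ∑ γ, A.C x γ α β • A.anchor γ x := by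
  have hρ (δ : Fin m) : DifferentiableAt ℝ (A.anchor δ) x := A.differentiable_anchor δ x
  have hcoord (δ ε : Fin m) (i : Fin n) : fderiv ℝ (A.anchor ε) x (A.anchor δ x) i =
      ∑ j, A.ρ x j δ * pderiv' (fun z => A.ρ z i ε) x j := by
    refine .trans ?_ (sum_ρ_mul_pderiv' (differentiableAt_pi.1 (hρ ε) i) δ).symm
    exact (DFunLike.congr_fun (fderiv_apply (hρ ε) i) (A.anchor δ x)).symm
  ext i
  rw [VectorField.lieBracket, Pi.sub_apply, hcoord, hcoord, ← Finset.sum_sub_distrib, hA]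
  simp [anchor, mul_comm]

lemma anchorDeriv_anchorDeriv_sub (hA : FirstStructureEq A) {f : (Fin n → ℝ) → ℝ}
    {x : Fin n → ℝ} (hf : ContDiffAt ℝ 2 f x) (α β : Fin m) :
    A.anchorDeriv α (A.anchorDeriv β f) x - A.anchorDeriv β (A.anchorDeriv α f) x =
      ∑ γ, A.C x γ α β * A.anchorDeriv γ f x := by
  calc A.anchorDeriv α (A.anchorDeriv β f) x - A.anchorDeriv β (A.anchorDeriv α f) x
      = fderiv ℝ f x (VectorField.lieBracket ℝ (A.anchor α) (A.anchor β) x) :=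
        (VectorField.fderiv_apply_lieBracket hf (by simp) (A.differentiable_anchor β x)
          (A.differentiable_anchor α x)).symm
    _ = ∑ γ, A.C x γ α β * A.anchorDeriv γ f x := by
        simp only [hA.lieBracket_anchor, map_sum, map_smul, smul_eq_mul, anchorDeriv]

end FirstStructureEq

section AdmissibleCurve

variable {n m : ℕ} {A : LocalAlgebroidData n m} {t₀ t₁ t : ℝ} {x : ℝ → Fin n → ℝ}
  {y : ℝ → Fin m → ℝ}

lemma IsAdmissible.deriv_eq_sum_anchor (hxy : IsAdmissible A t₀ t₁ x y) (ht : t ∈ Icc t₀ t₁)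
    (hx : DifferentiableAt ℝ x t) : deriv x t = ∑ β, y t β • A.anchor β (x t) := by
  ext i
  rw [← (hasDerivAt_pi.1 hx.hasDerivAt i).deriv, hxy t ht i]
  simp [anchor, mul_comm]

lemma IsAdmissible.deriv_comp (hxy : IsAdmissible A t₀ t₁ x y) (ht : t ∈ Icc t₀ t₁)
    (hx : DifferentiableAt ℝ x t) {g : (Fin n → ℝ) → ℝ} (hg : DifferentiableAt ℝ g (x t)) :
    deriv (fun s => g (x s)) t = ∑ β, y t β * A.anchorDeriv β g (x t) := by
  calc deriv (fun s => g (x s)) t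
      = fderiv ℝ g (x t) (deriv x t) := fderiv_comp_deriv t hg hx
    _ = ∑ β, y t β * A.anchorDeriv β g (x t) := by
        simp only [hxy.deriv_eq_sum_anchor ht hx, map_sum, map_smul, smul_eq_mul, anchorDeriv]

lemma IsAdmissible.isLagrangeSolution_totalDerivative (hxy : IsAdmissible A t₀ t₁ x y)
    (hA : FirstStructureEq A) {f : (Fin n → ℝ) → ℝ} (hf : ContDiff ℝ 2 f)
    (hx : ∀ t ∈ Icc t₀ t₁, DifferentiableAt ℝ x t) :
    IsLagrangeSolution A (A.totalDerivative f) t₀ t₁ x y := by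
  intro α t ht
  simp only [pLy_totalDerivative (hf.differentiable two_ne_zero),
    sum_ρ_mul_pLx_totalDerivative hf,
    hxy.deriv_comp ht (hx t ht) (differentiable_anchorDeriv hf α _)]
  rw [← Finset.sum_add_distrib]
  refine Finset.sum_congr rfl fun β _ => ?_
  have hcomm := hA.anchorDeriv_anchorDeriv_sub hf.contDiffAt (x := x t) α β
  simp only [mul_right_comm _ (y t β), ← Finset.sum_mul, ← hcomm]
  ring

end AdmissibleCurve

theorem gauge_invariance_total_derivative_general {n m : ℕ} {A : LocalAlgebroidData n m}
    (hA : FirstStructureEq A) {f : (Fin n → ℝ) → ℝ} (hf : ContDiff ℝ 2 f) {t₀ t₁ : ℝ}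
    {x : ℝ → Fin n → ℝ} {y : ℝ → Fin m → ℝ}
    (hx : ∀ t ∈ Icc t₀ t₁, DifferentiableAt ℝ x t) (hxy : IsAdmissible A t₀ t₁ x y) :
    IsLagrangeSolution A (A.totalDerivative f) t₀ t₁ x y ∧
      ∀ L : (Fin n → ℝ) × (Fin m → ℝ) → ℝ, Differentiable ℝ L →
        (∀ α, ∀ t ∈ Icc t₀ t₁, DifferentiableAt ℝ (fun s => pLy L (x s) (y s) α) t) →
        (IsLagrangeSolution A L t₀ t₁ x y ↔
          IsLagrangeSolution A (L + A.totalDerivative f) t₀ t₁ x y) := by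
  have hsol := hxy.isLagrangeSolution_totalDerivative hA hf hx
  refine ⟨hsol, fun L hL hLy => ?_⟩
  refine (isLagrangeSolution_add_iff hL (differentiable_totalDerivative hf) hLy ?_ hsol).symm
  intro α t ht
  simp only [pLy_totalDerivative (hf.differentiable two_ne_zero)]
  exact (differentiable_anchorDeriv hf α _).comp t (hx t ht)

/-- **Gauge invariance under total derivatives (coordinate form).**  For smooth
`f : ℝ^n → ℝ`, the "total time derivative" Lagrangian
`ΔL(x,y) = Σ_{i,α} ∂f/∂x^i(x) ρ^i_α(x) y^α` has identically vanishing Euler–Lagrange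
expression along every admissible C¹ curve; consequently, for any C² Lagrangian `L`,
the solutions of Lagrange's equations for `L` and for `L + ΔL` coincide. -/
theorem gauge_invariance_total_derivative
    {n m : ℕ} (A : LocalAlgebroidData n m) (hA : FirstStructureEq A)
    (f : (Fin n → ℝ) → ℝ) (hf : ContDiff ℝ (⊤ : ℕ∞) f)
    (t₀ t₁ : ℝ) (ht : t₀ < t₁) :
    (∀ (x : ℝ → Fin n → ℝ) (y : ℝ → Fin m → ℝ),
      ContDiff ℝ 1 x → ContDiff ℝ 1 y → IsAdmissible A t₀ t₁ x y →
      IsLagrangeSolution A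
        (fun p => ∑ i, ∑ α, pderiv' f p.1 i * A.ρ p.1 i α * p.2 α) t₀ t₁ x y)
    ∧ (∀ (L : (Fin n → ℝ) × (Fin m → ℝ) → ℝ), ContDiff ℝ 2 L →
        ∀ (x : ℝ → Fin n → ℝ) (y : ℝ → Fin m → ℝ),
        ContDiff ℝ 1 x → ContDiff ℝ 1 y → IsAdmissible A t₀ t₁ x y →
        (IsLagrangeSolution A L t₀ t₁ x y ↔
          IsLagrangeSolution A
            (fun p => L p + ∑ i, ∑ α, pderiv' f p.1 i * A.ρ p.1 i α * p.2 α)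
            t₀ t₁ x y)) := by
  have gauge {x y} (hx : ContDiff ℝ 1 x) (hxy : IsAdmissible A t₀ t₁ x y) :=
    gauge_invariance_total_derivative_general hA (contDiff_infty.1 hf 2)
      (fun t _ => hx.differentiable one_ne_zero t) hxy
  exact ⟨fun x y hx _ hxy => (gauge hx hxy).1, fun L hL x y hx hy hxy =>
    (gauge hx hxy).2 L (hL.differentiable two_ne_zero) fun α t _ => differentiableAt_pLy_comp hL
      (hx.differentiable one_ne_zero t) (hy.differentiable one_ne_zero t) α⟩
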